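/- For a finite-dimensional Λ-module M the following are equivalent: (a) socseq(M) ≠ reverse(rad(M)); (b) there exist ρ ∈ {1,…,L} and x ∈ M with x ∉ J^ρ M and J·x ⊆ J^{ρ+1} M; (c) there exists ρ ∈ {0,…,L−1} such that the Λ-module J^ρ M / J^{ρ+2} M has a simple direct summand, i.e., contains a simple submodule admitting a complementary submodule. -/

import Mathlib

noncomputable section

/-- The relation on the free algebra killing all products of `L+1` generators. -/
def TruncRel (K : Type*) [Field K] (r L : ℕ) :
    FreeAlgebra K (Fin r) → FreeAlgebra K (Fin r) → Prop := fun a b =>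
  (∃ f : Fin (L + 1) → Fin r, a = (List.ofFn fun j => FreeAlgebra.ι K (f j)).prod) ∧ b = 0

/-- The local truncated path algebra with `r` loops and Loewy length `L+1`:
the quotient of `K⟨X_1,…,X_r⟩` by the two-sided ideal generated by all products
of `L+1` generators. -/
def TruncAlg (K : Type*) [Field K] (r L : ℕ) : Type _ := RingQuot (TruncRel K r L)

instance (K : Type*) [Field K] (r L : ℕ) : Ring (TruncAlg K r L) :=
  inferInstanceAs (Ring (RingQuot _))

instance (K : Type*) [Field K] (r L : ℕ) : Algebra K (TruncAlg K r L) :=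
  inferInstanceAs (Algebra K (RingQuot _))

/-- The images of the generators `X i` in the truncated algebra. -/
def gen (K : Type*) [Field K] (r L : ℕ) (i : Fin r) : TruncAlg K r L :=
  RingQuot.mkAlgHom K (TruncRel K r L) (FreeAlgebra.ι K i)

/-- The two-sided ideal `J` of `Λ` generated by the images of `X_1,…,X_r`,
realized as a `K`-submodule of `Λ`. -/
def Jrad (K : Type*) [Field K] (r L : ℕ) : Submodule K (TruncAlg K r L) :=
  ⊤ * Submodule.span K (Set.range (gen K r L)) * ⊤

/-- `J^l M`, the submodule of `M` given by the action of `J^l`. -/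
def jpow (K : Type*) [Field K] (r L : ℕ) (M : Type*) [AddCommGroup M] [Module K M]
    [Module (TruncAlg K r L) M] [IsScalarTower K (TruncAlg K r L) M] (l : ℕ) :
    Submodule (TruncAlg K r L) M :=
  Submodule.span (TruncAlg K r L)
    {x : M | ∃ a ∈ (Jrad K r L ^ l : Submodule K (TruncAlg K r L)), ∃ m : M, x = a • m}

/-- The socle of a module: the supremum of all simple submodules. -/
def socle (R N : Type*) [Ring R] [AddCommGroup N] [Module R N] : Submodule R N :=
  sSup {p : Submodule R N | IsSimpleModule R ↥p}

/-- The socle series: `socSeries R M l` is `soc_{l-1} M`, so `socSeries R M 0 = soc_{-1} M = ⊥`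
and `socSeries R M (l+1) = soc_l M` is the preimage in `M` of `soc (M / soc_{l-1} M)`. -/
def socSeries (R M : Type*) [Ring R] [AddCommGroup M] [Module R M] : ℕ → Submodule R M
  | 0 => ⊥
  | l + 1 => Submodule.comap (socSeries R M l).mkQ (socle R (M ⧸ socSeries R M l))

/-- Dimension of the subquotient `q / (p ⊓ q)`; for `p ≤ q` this is `dim (q/p)`. -/
def quotDim (K M : Type*) [Field K] [AddCommGroup M] [Module K M]
    (p q : Submodule K M) : ℕ :=
  Module.finrank K (↥q ⧸ Submodule.comap q.subtype p)

/-- The radical layering `rad(M) = (dim_K J^l M / J^{l+1} M)_{l=0,…,L}`. -/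
def radLayering (K : Type*) [Field K] (r L : ℕ) (M : Type*) [AddCommGroup M] [Module K M]
    [Module (TruncAlg K r L) M] [IsScalarTower K (TruncAlg K r L) M] : Fin (L + 1) → ℕ :=
  fun l => quotDim K M ((jpow K r L M ((l : ℕ) + 1)).restrictScalars K)
    ((jpow K r L M (l : ℕ)).restrictScalars K)

/-- The socle layering `socseq(M) = (dim_K soc_l M / soc_{l-1} M)_{l=0,…,L}`. -/
def socLayering (K : Type*) [Field K] (r L : ℕ) (M : Type*) [AddCommGroup M] [Module K M]
    [Module (TruncAlg K r L) M] [IsScalarTower K (TruncAlg K r L) M] : Fin (L + 1) → ℕ :=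
  fun l => quotDim K M ((socSeries (TruncAlg K r L) M (l : ℕ)).restrictScalars K)
    ((socSeries (TruncAlg K r L) M ((l : ℕ) + 1)).restrictScalars K)

/-- The dominance order on `ℕ^{L+1}`: `a ≼ b` iff all partial sums satisfy `≤`. -/
def DomLE (L : ℕ) (a b : Fin (L + 1) → ℕ) : Prop :=
  ∀ l : Fin (L + 1), ∑ j ∈ Finset.Iic l, a j ≤ ∑ j ∈ Finset.Iic l, b j

/-- `reverse (a_0, …, a_L) = (a_L, …, a_0)`. -/
def revTuple (L : ℕ) (a : Fin (L + 1) → ℕ) : Fin (L + 1) → ℕ := fun l => a l.rev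

section helpers

variable {K : Type*} [Field K] {r L : ℕ}

lemma top_le_left :
    (⊤ : Submodule K (TruncAlg K r L)) ≤ 1 ⊔ Submodule.span K (Set.range (gen K r L)) * ⊤ := by
  set V := Submodule.span K (Set.range (gen K r L)) with hV
  intro a _
  have hs : Function.Surjective (RingQuot.mkAlgHom K (TruncRel K r L)) :=
    RingQuot.mkAlgHom_surjective K _
  obtain ⟨b, rfl⟩ := hs a
  have hmul : (1 ⊔ V * ⊤) * (1 ⊔ V * ⊤) ≤ 1 ⊔ V * (⊤ : Submodule K (TruncAlg K r L)) := by
    rw [Submodule.sup_mul, one_mul, Submodule.mul_sup, mul_one]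
    refine sup_le le_rfl (sup_le le_sup_right (le_trans ?_ le_sup_right))
    rw [mul_assoc]
    exact mul_le_mul' le_rfl le_top
  induction b using FreeAlgebra.induction with
  | grade0 c =>
    refine Submodule.mem_sup_left ?_
    rw [AlgHom.commutes]
    exact Submodule.algebraMap_mem c
  | grade1 i =>
    refine Submodule.mem_sup_right ?_
    have := Submodule.mul_mem_mul (M := V) (N := ⊤)
      (Submodule.subset_span (Set.mem_range_self i)) (Submodule.mem_top (x := 1))
    rw [mul_one] at this
    exact this
  | mul a b ha hb =>
    rw [map_mul]
    exact hmul (Submodule.mul_mem_mul (ha trivial) (hb trivial))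
  | add a b ha hb =>
    rw [map_add]
    exact Submodule.add_mem _ (ha trivial) (hb trivial)

lemma top_le_right :
    (⊤ : Submodule K (TruncAlg K r L)) ≤ 1 ⊔ ⊤ * Submodule.span K (Set.range (gen K r L)) := by
  set V := Submodule.span K (Set.range (gen K r L)) with hV
  intro a _
  have hs : Function.Surjective (RingQuot.mkAlgHom K (TruncRel K r L)) :=
    RingQuot.mkAlgHom_surjective K _
  obtain ⟨b, rfl⟩ := hs a
  have hmul : (1 ⊔ ⊤ * V) * (1 ⊔ ⊤ * V) ≤ 1 ⊔ (⊤ : Submodule K (TruncAlg K r L)) * V := by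
    rw [Submodule.mul_sup, mul_one, Submodule.sup_mul, one_mul]
    refine sup_le le_rfl (sup_le le_sup_right (le_trans ?_ le_sup_right))
    rw [← mul_assoc]
    exact mul_le_mul' le_top le_rfl
  induction b using FreeAlgebra.induction with
  | grade0 c =>
    refine Submodule.mem_sup_left ?_
    rw [AlgHom.commutes]
    exact Submodule.algebraMap_mem c
  | grade1 i =>
    refine Submodule.mem_sup_right ?_
    have := Submodule.mul_mem_mul (M := ⊤) (N := V) (Submodule.mem_top (x := 1))
      (Submodule.subset_span (Set.mem_range_self i)) 
    rw [one_mul] at this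
    exact this
  | mul a b ha hb =>
    rw [map_mul]
    exact hmul (Submodule.mul_mem_mul (ha trivial) (hb trivial))
  | add a b ha hb =>
    rw [map_add]
    exact Submodule.add_mem _ (ha trivial) (hb trivial)

lemma top_mul_top' : (⊤ : Submodule K (TruncAlg K r L)) * ⊤ = ⊤ := by
  refine le_antisymm le_top fun a _ => ?_
  simpa using Submodule.mul_mem_mul (Submodule.mem_top (x := a) (R := K))
    (Submodule.mem_top (x := (1 : TruncAlg K r L)) (R := K))

lemma Jrad_eq : Jrad K r L = Submodule.span K (Set.range (gen K r L)) * ⊤ := by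
  unfold Jrad
  set V := Submodule.span K (Set.range (gen K r L)) with hV
  have h1 : (⊤ : Submodule K (TruncAlg K r L)) = 1 ⊔ V * ⊤ := le_antisymm top_le_left le_top
  have h2 : (⊤ : Submodule K (TruncAlg K r L)) = 1 ⊔ ⊤ * V := le_antisymm top_le_right le_top
  have h3 : ⊤ * V = V * ⊤ := by
    calc ⊤ * V = (1 ⊔ V * ⊤) * V := by rw [← h1]
      _ = V * (1 ⊔ ⊤ * V) := by
        rw [Submodule.mul_sup, mul_one, Submodule.sup_mul, one_mul, mul_assoc]
      _ = V * ⊤ := by rw [← h2]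
  rw [h3, mul_assoc, top_mul_top']

lemma Jrad_mul_left (b : TruncAlg K r L) {a : TruncAlg K r L} (ha : a ∈ Jrad K r L) :
    b * a ∈ Jrad K r L := by
  have := Submodule.mul_mem_mul (Submodule.mem_top (x := b) (R := K)) ha
  unfold Jrad at this ⊢
  rwa [← mul_assoc, ← mul_assoc, top_mul_top'] at this

lemma Jrad_mul_right (b : TruncAlg K r L) {a : TruncAlg K r L} (ha : a ∈ Jrad K r L) :
    a * b ∈ Jrad K r L := by
  have := Submodule.mul_mem_mul ha (Submodule.mem_top (x := b) (R := K))
  unfold Jrad at this ⊢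
  rwa [mul_assoc, top_mul_top'] at this

lemma exists_decomp (a : TruncAlg K r L) :
    ∃ c : K, ∃ j ∈ Jrad K r L, a = algebraMap K _ c + j := by
  have := top_le_left (K := K) (Submodule.mem_top (x := a))
  rw [← Jrad_eq] at this
  obtain ⟨y, hy, z, hz, rfl⟩ := Submodule.mem_sup.1 this
  obtain ⟨c, rfl⟩ := Submodule.mem_one.1 hy
  exact ⟨c, z, hz, rfl⟩

lemma Jrad_pow_le (n : ℕ) :
    Jrad K r L ^ n ≤ Submodule.span K (Set.range (gen K r L)) ^ n * ⊤ := by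
  induction n with
  | zero => simp
  | succ n ih =>
    have h : (⊤ : Submodule K (TruncAlg K r L)) * Jrad K r L ≤ Jrad K r L := by
      rw [Submodule.mul_le]
      intro m _ n hn
      exact Jrad_mul_left m hn
    calc Jrad K r L ^ (n+1) ≤ (Submodule.span K (Set.range (gen K r L)) ^ n * ⊤) * Jrad K r L := by
          rw [pow_succ]; exact mul_le_mul' ih le_rfl
      _ ≤ Submodule.span K (Set.range (gen K r L)) ^ n * Jrad K r L := by
          rw [mul_assoc]; exact mul_le_mul' le_rfl h
      _ = _ := by rw [Jrad_eq, pow_succ, mul_assoc]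

lemma Jrad_pow_bot : Jrad K r L ^ (L + 1) = ⊥ := by
  have h : Submodule.span K (Set.range (gen K r L)) ^ (L + 1) = ⊥ := by
    rw [Submodule.span_pow, Submodule.span_eq_bot]
    intro x hx
    obtain ⟨f, rfl⟩ := Set.mem_pow.1 hx
    choose g hg using fun i => (f i).2
    have h0 : RingQuot.mkAlgHom K (TruncRel K r L)
        (List.ofFn fun j => FreeAlgebra.ι K (g j)).prod = 
        RingQuot.mkAlgHom K (TruncRel K r L) 0 :=
      RingQuot.mkAlgHom_rel K ⟨⟨g, rfl⟩, rfl⟩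
    rw [map_zero, map_list_prod, List.map_ofFn] at h0
    have h1 : (fun i => ((f i : Set.range (gen K r L)) : TruncAlg K r L)) =
      (RingQuot.mkAlgHom K (TruncRel K r L)) ∘ fun j => FreeAlgebra.ι K (g j) := by
      funext i
      exact (hg i).symm
    rw [h1]
    exact h0
  have := Jrad_pow_le (K := K) (r := r) (L := L) (L + 1)
  rw [h, Submodule.bot_mul] at this
  exact le_bot_iff.1 this

lemma Jrad_nilp {a : TruncAlg K r L} (ha : a ∈ Jrad K r L) : a ^ (L + 1) = 0 := by
  have := Submodule.pow_mem_pow _ ha (L + 1)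
  rwa [Jrad_pow_bot, Submodule.mem_bot] at this

section mod
variable {N : Type*} [AddCommGroup N] [Module (TruncAlg K r L) N]

lemma kill_of_simple (p : Submodule (TruncAlg K r L) N) [IsSimpleModule (TruncAlg K r L) p]
    {a : TruncAlg K r L} (ha : a ∈ Jrad K r L) {x : N} (hx : x ∈ p) : a • x = 0 := by
  by_contra hne
  have hat : IsAtom p := isSimpleModule_iff_isAtom.1 inferInstance
  have hle : Submodule.span (TruncAlg K r L) {a • x} ≤ p := by
    rw [Submodule.span_singleton_le_iff_mem]; exact p.smul_mem _ hx
  rcases hat.le_iff.1 hle with h | h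
  · rw [Submodule.span_singleton_eq_bot] at h; exact hne h
  · rw [← h] at hx
    obtain ⟨b, hb⟩ := Submodule.mem_span_singleton.1 hx
    have hba : (b * a) • x = x := by rw [mul_smul, hb]
    have hpow : ∀ n : ℕ, (b * a) ^ n • x = x := by
      intro n
      induction n with
      | zero => simp
      | succ n ih => rw [pow_succ, mul_smul, hba, ih]
    have := hpow (L + 1)
    rw [Jrad_nilp (Jrad_mul_left b ha), zero_smul] at this
    exact hne (by rw [← this, smul_zero])

lemma simple_of_kill {x : N} (hx0 : x ≠ 0) (hx : ∀ a ∈ Jrad K r L, a • x = 0) :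
    IsSimpleModule (TruncAlg K r L) (Submodule.span (TruncAlg K r L) {x}) := by
  rw [isSimpleModule_iff_isAtom]
  refine ⟨by simpa [Submodule.span_singleton_eq_bot] using hx0, fun q hq => ?_⟩
  by_contra hne
  obtain ⟨y, hy, hy0⟩ := q.exists_mem_ne_zero_of_ne_bot hne
  obtain ⟨a, rfl⟩ := Submodule.mem_span_singleton.1 (hq.le hy)
  obtain ⟨c, j, hj, rfl⟩ := exists_decomp a
  rw [add_smul, hx j hj, add_zero] at hy hy0
  have hc : c ≠ 0 := by
    rintro rfl
    simp at hy0
  refine hq.not_ge ?_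
  rw [Submodule.span_singleton_le_iff_mem]
  have := q.smul_mem (algebraMap K _ c⁻¹) hy
  rwa [← mul_smul, ← map_mul, inv_mul_cancel₀ hc, map_one, one_smul] at this

lemma mem_socle_iff {x : N} :
    x ∈ socle (TruncAlg K r L) N ↔ ∀ a ∈ Jrad K r L, a • x = 0 := by
  constructor
  · intro hx a ha
    let T : Submodule (TruncAlg K r L) N :=
      { carrier := {x | ∀ a ∈ Jrad K r L, a • x = 0}
        add_mem' := fun h1 h2 a ha => by rw [smul_add, h1 a ha, h2 a ha, add_zero]
        zero_mem' := fun a _ => smul_zero a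
        smul_mem' := fun b x hx a ha => by
          rw [← mul_smul]; exact hx _ (Jrad_mul_right b ha) }
    have : socle (TruncAlg K r L) N ≤ T := by
      refine sSup_le fun p hp y hy a ha => ?_
      have : IsSimpleModule (TruncAlg K r L) p := hp
      exact kill_of_simple p ha hy
    exact this hx a ha
  · intro h
    by_cases hx : x = 0
    · rw [hx]; exact zero_mem _
    · exact le_sSup (a := Submodule.span (TruncAlg K r L) {x}) (simple_of_kill hx h)
        (Submodule.mem_span_singleton_self x)

lemma mem_socSeries_succ {l : ℕ} {x : N} :
    x ∈ socSeries (TruncAlg K r L) N (l + 1) ↔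
      ∀ a ∈ Jrad K r L, a • x ∈ socSeries (TruncAlg K r L) N l := by
  rw [socSeries, Submodule.mem_comap, mem_socle_iff]
  refine forall₂_congr fun a _ => ?_
  rw [← map_smul, Submodule.mkQ_apply, Submodule.Quotient.mk_eq_zero]

lemma socSeries_mono_succ (l : ℕ) :
    socSeries (TruncAlg K r L) N l ≤ socSeries (TruncAlg K r L) N (l + 1) := fun _ hx =>
  mem_socSeries_succ.2 fun a _ => Submodule.smul_mem _ a hx

lemma exists_compl [Module K N] [IsScalarTower K (TruncAlg K r L) N]
    (P : Submodule (TruncAlg K r L) N) (hP : ∀ a ∈ Jrad K r L, ∀ y : N, a • y ∈ P)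
    {x : N} (hx : ∀ a ∈ Jrad K r L, a • x = 0) (hxP : x ∉ P) :
    ∃ q, IsCompl (Submodule.span (TruncAlg K r L) {x}) q := by
  obtain ⟨f, hfx, hf⟩ := Submodule.exists_dual_map_eq_bot_of_notMem (R := K)
    (p := P.restrictScalars K) (x := x) hxP inferInstance
  have hfP : ∀ y ∈ P, f y = 0 := fun y hy => by
    have : f y ∈ (P.restrictScalars K).map f := ⟨y, hy, rfl⟩
    rwa [hf, Submodule.mem_bot] at this
  have key : ∀ (c : K) (j : TruncAlg K r L), j ∈ Jrad K r L → ∀ y,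
      f ((algebraMap K (TruncAlg K r L) c + j) • y) = c * f y := by
    intro c j hj y
    rw [add_smul, map_add, hfP _ (hP j hj y), add_zero, algebraMap_smul, map_smul, smul_eq_mul]
  let q : Submodule (TruncAlg K r L) N :=
    { carrier := {y | f y = 0}
      add_mem' := fun {a b} h1 h2 => by
        change f (a + b) = 0
        rw [map_add, h1, h2, add_zero]
      zero_mem' := map_zero f
      smul_mem' := fun a y hy => by
        obtain ⟨c, j, hj, rfl⟩ := exists_decomp a
        change f _ = 0
        rw [key c j hj, show f y = 0 from hy, mul_zero] }
  refine ⟨q, ?_, ?_⟩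
  · rw [Submodule.disjoint_def]
    intro y hy hyq
    obtain ⟨a, rfl⟩ := Submodule.mem_span_singleton.1 hy
    obtain ⟨c, j, hj, rfl⟩ := exists_decomp a
    have h : f _ = 0 := hyq
    rw [key c j hj] at h
    have hc : c = 0 := (mul_eq_zero.1 h).resolve_right hfx
    rw [add_smul, hx j hj, hc, map_zero, zero_smul, zero_add]
  · rw [codisjoint_iff, eq_top_iff]
    intro y _
    rw [Submodule.mem_sup]
    refine ⟨algebraMap K (TruncAlg K r L) (f y / f x) • x,
      Submodule.smul_mem _ _ (Submodule.mem_span_singleton_self x),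
      y - algebraMap K (TruncAlg K r L) (f y / f x) • x, ?_, by abel⟩
    change f _ = 0
    rw [map_sub, algebraMap_smul, map_smul, smul_eq_mul, div_mul_cancel₀ _ hfx, sub_self]

end mod

section modK
variable {M : Type*} [AddCommGroup M] [Module K M] [Module (TruncAlg K r L) M]
    [IsScalarTower K (TruncAlg K r L) M]

lemma smul_mem_jpow {l : ℕ} {x : M} (hx : x ∈ jpow K r L M l) :
    ∀ a ∈ Jrad K r L, a • x ∈ jpow K r L M (l + 1) := by
  unfold jpow at hx
  induction hx using Submodule.span_induction with
  | mem x h =>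
    obtain ⟨b, hb, m, rfl⟩ := h
    intro a ha
    refine Submodule.subset_span ⟨a * b, ?_, m, (mul_smul _ _ _).symm⟩
    rw [pow_succ']
    exact Submodule.mul_mem_mul ha hb
  | zero => intro a _; rw [smul_zero]; exact zero_mem _
  | add x y _ _ hx hy => intro a ha; rw [smul_add]; exact add_mem (hx a ha) (hy a ha)
  | smul c x _ hx => intro a ha; rw [← mul_smul]; exact hx _ (Jrad_mul_right c ha)

lemma jpow_succ_le {l : ℕ} {Q : Submodule (TruncAlg K r L) M}
    (h : ∀ a ∈ Jrad K r L, ∀ x ∈ jpow K r L M l, a • x ∈ Q) : jpow K r L M (l + 1) ≤ Q := by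
  refine Submodule.span_le.2 ?_
  rintro _ ⟨c, hc, m, rfl⟩
  rw [pow_succ'] at hc
  change c • m ∈ Q
  induction hc using Submodule.mul_induction_on' with
  | mem_mul_mem a ha b hb =>
    rw [mul_smul]
    exact h a ha _ (Submodule.subset_span ⟨b, hb, m, rfl⟩)
  | add x _ y _ hx hy => rw [add_smul]; exact add_mem hx hy

variable (K r L M) in
lemma jpow_anti : Antitone (jpow K r L M) :=
  antitone_nat_of_succ_le fun _ => jpow_succ_le fun a _ _ hx => Submodule.smul_mem _ a hx

variable (K r L M) in
lemma jpow_zero : jpow K r L M 0 = ⊤ := by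
  rw [eq_top_iff]
  intro x _
  exact Submodule.subset_span ⟨1, by rw [pow_zero]; exact Submodule.one_le.1 le_rfl, x, by simp⟩

variable (K r L M) in
lemma jpow_last : jpow K r L M (L + 1) = ⊥ := by
  unfold jpow
  rw [Submodule.span_eq_bot]
  rintro _ ⟨a, ha, m, rfl⟩
  rw [Jrad_pow_bot, Submodule.mem_bot] at ha
  rw [ha, zero_smul]

lemma jpow_le_socSeries (l : ℕ) (hl : l ≤ L + 1) :
    jpow K r L M (L + 1 - l) ≤ socSeries (TruncAlg K r L) M l := by
  induction l with
  | zero => simp [jpow_last]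
  | succ l ih =>
    intro x hx
    rw [mem_socSeries_succ]
    intro a ha
    refine ih (by omega) ?_
    rw [show L + 1 - l = L + 1 - (l + 1) + 1 by omega]
    exact smul_mem_jpow hx a ha

lemma quotDim_add [FiniteDimensional K M] {p q : Submodule K M} (h : p ≤ q) :
    quotDim K M p q + Module.finrank K p = Module.finrank K q := by
  unfold quotDim
  rw [← (Submodule.comapSubtypeEquivOfLe h).finrank_eq]
  exact Submodule.finrank_quotient_add_finrank _

lemma layering_eq_iff [FiniteDimensional K M] :
    socLayering K r L M = revTuple L (radLayering K r L M) ↔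
      ∀ l ≤ L + 1, socSeries (TruncAlg K r L) M l = jpow K r L M (L + 1 - l) := by
  have hs : ∀ l : Fin (L + 1), socLayering K r L M l +
      Module.finrank K ((socSeries (TruncAlg K r L) M (l : ℕ)).restrictScalars K) =
      Module.finrank K ((socSeries (TruncAlg K r L) M ((l : ℕ) + 1)).restrictScalars K) :=
    fun l => quotDim_add (socSeries_mono_succ _)
  have hrad : ∀ l : Fin (L + 1), revTuple L (radLayering K r L M) l +
      Module.finrank K ((jpow K r L M (L + 1 - l)).restrictScalars K) =
      Module.finrank K ((jpow K r L M (L + 1 - (l + 1))).restrictScalars K) := by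
    intro l
    have := quotDim_add (K := K) (M := M)
      (p := (jpow K r L M ((l.rev : ℕ) + 1)).restrictScalars K)
      (q := (jpow K r L M (l.rev : ℕ)).restrictScalars K) (jpow_anti K r L M (Nat.le_succ _))
    have e1 : (l.rev : ℕ) + 1 = L + 1 - l := by rw [Fin.val_rev]; omega
    have e2 : (l.rev : ℕ) = L + 1 - (l + 1) := by rw [Fin.val_rev]
    rw [← e1, ← e2]
    exact this
  constructor
  · intro h l hl
    induction l with
    | zero => rw [Nat.sub_zero, jpow_last]; rfl
    | succ l ih =>
      have ih := ih (by omega)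
      have h1 := hs ⟨l, by omega⟩
      have h2 := hrad ⟨l, by omega⟩
      rw [h] at h1
      simp only at h1 h2
      rw [ih, h2] at h1
      have := Submodule.eq_of_le_of_finrank_eq
        (S₁ := (jpow K r L M (L + 1 - (l + 1))).restrictScalars K)
        (S₂ := (socSeries (TruncAlg K r L) M (l + 1)).restrictScalars K)
        (jpow_le_socSeries (l + 1) hl) h1
      exact (Submodule.restrictScalars_injective K _ _ this).symm
  · intro h
    funext l
    have h1 := hs l
    have h2 := hrad l
    rw [h l (by omega), h (l + 1) (by omega)] at h1
    omega

end modK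
end helpers


/-- For a finite-dimensional `Λ`-module `M`, the following are equivalent:
(a) `socseq M ≠ reverse (rad M)`;
(b) there are `ρ ∈ {1,…,L}` and `x ∈ M` with `x ∉ J^ρ M` and `J x ⊆ J^{ρ+1} M`;
(c) there is `ρ ∈ {0,…,L-1}` such that `J^ρ M / J^{ρ+2} M` has a simple direct summand. -/
theorem stmt7 (K : Type) [Field K] [IsAlgClosed K] (r L : ℕ) (hr : 0 < r) (hL : 0 < L)
    (M : Type) [AddCommGroup M] [Module K M] [Module (TruncAlg K r L) M]
    [IsScalarTower K (TruncAlg K r L) M] [FiniteDimensional K M] :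
    ((socLayering K r L M ≠ revTuple L (radLayering K r L M)) ↔
      (∃ ρ : ℕ, 1 ≤ ρ ∧ ρ ≤ L ∧ ∃ x : M, x ∉ jpow K r L M ρ ∧
        ∀ a ∈ Jrad K r L, a • x ∈ jpow K r L M (ρ + 1))) ∧
    ((∃ ρ : ℕ, 1 ≤ ρ ∧ ρ ≤ L ∧ ∃ x : M, x ∉ jpow K r L M ρ ∧
        ∀ a ∈ Jrad K r L, a • x ∈ jpow K r L M (ρ + 1)) ↔
      (∃ ρ : ℕ, ρ + 1 ≤ L ∧
        ∃ p : Submodule (TruncAlg K r L)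
          (↥(jpow K r L M ρ) ⧸
            Submodule.comap (jpow K r L M ρ).subtype (jpow K r L M (ρ + 2))),
          IsSimpleModule (TruncAlg K r L) ↥p ∧ ∃ q, IsCompl p q)) := by
  refine ⟨?_, ?_, ?_⟩
  · rw [Ne, layering_eq_iff, ← not_iff_not, not_not]
    constructor
    · rintro h ⟨ρ, h1, h2, x, hx, hJ⟩
      apply hx
      have e : ρ = L + 1 - (L - ρ + 1) := by omega
      rw [e, ← h _ (by omega), mem_socSeries_succ]
      rw [h _ (by omega), show L + 1 - (L - ρ) = ρ + 1 by omega]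
      exact hJ
    · intro h l hl
      induction l with
      | zero => rw [Nat.sub_zero, jpow_last]; rfl
      | succ l ih =>
        refine le_antisymm ?_ (jpow_le_socSeries _ hl)
        intro x hx
        by_cases hlL : l = L
        · rw [hlL, Nat.sub_self, jpow_zero]; trivial
        by_contra hx'
        refine h ⟨L + 1 - (l + 1), by omega, by omega, x, hx', ?_⟩
        rw [mem_socSeries_succ, ih (by omega)] at hx
        rwa [show L + 1 - (l + 1) + 1 = L + 1 - l by omega]
  · rintro ⟨ρ, h1, h2, x, hx, hJ⟩
    obtain ⟨σ, hσ, hxσ, hxσ'⟩ : ∃ σ < ρ, x ∈ jpow K r L M σ ∧ x ∉ jpow K r L M (σ + 1) := by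
      by_contra! hcon
      have : ∀ n ≤ ρ, x ∈ jpow K r L M n := by
        intro n hn
        induction n with
        | zero => rw [jpow_zero]; trivial
        | succ n ih => exact hcon n (by omega) (ih (by omega))
      exact hx (this ρ le_rfl)
    refine ⟨σ, by omega, ?_⟩
    set W := Submodule.comap (jpow K r L M σ).subtype (jpow K r L M (σ + 2)) with hW
    let P := (Submodule.comap (jpow K r L M σ).subtype (jpow K r L M (σ + 1))).map W.mkQ
    let y := W.mkQ ⟨x, hxσ⟩
    have hyP : y ∉ P := by
      rintro ⟨z, hz, hzy⟩
      apply hxσ'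
      have h3 : z - ⟨x, hxσ⟩ ∈ W := (Submodule.Quotient.eq W).1 hzy
      have h4 : (z : M) - x ∈ jpow K r L M (σ + 1) := jpow_anti K r L M (by omega) h3
      have h5 : (z : M) ∈ jpow K r L M (σ + 1) := hz
      have := sub_mem h5 h4
      rwa [sub_sub_cancel] at this
    have hky : ∀ a ∈ Jrad K r L, a • y = 0 := by
      intro a ha
      change W.mkQ (a • ⟨x, hxσ⟩) = 0
      rw [Submodule.mkQ_apply, Submodule.Quotient.mk_eq_zero]
      exact jpow_anti K r L M (by omega : σ + 2 ≤ ρ + 1) (hJ a ha)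
    have hP : ∀ a ∈ Jrad K r L, ∀ z, a • z ∈ P := by
      intro a ha z
      obtain ⟨z, rfl⟩ := W.mkQ_surjective z
      exact ⟨a • z, smul_mem_jpow z.2 a ha, map_smul _ _ _⟩
    refine ⟨Submodule.span _ {y}, simple_of_kill ?_ hky, exists_compl P hP hky hyP⟩
    intro h0
    exact hyP (h0 ▸ zero_mem P)
  · rintro ⟨ρ, h1, hex⟩
    set W := Submodule.comap (jpow K r L M ρ).subtype (jpow K r L M (ρ + 2)) with hW
    obtain ⟨p, hp, q, hpq⟩ := hex
    have hat : IsAtom p := isSimpleModule_iff_isAtom.1 hp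
    obtain ⟨y, hy, hy0⟩ := p.exists_mem_ne_zero_of_ne_bot hat.1
    obtain ⟨x, rfl⟩ := W.mkQ_surjective y
    refine ⟨ρ + 1, by omega, h1, x, ?_, ?_⟩
    · intro hx
      have hle : jpow K r L M (ρ + 1) ≤ (q.comap W.mkQ).map (jpow K r L M ρ).subtype := by
        refine jpow_succ_le fun a ha z hz => ⟨a • ⟨z, hz⟩, ?_, rfl⟩
        change W.mkQ (a • ⟨z, hz⟩) ∈ q
        have : W.mkQ ⟨z, hz⟩ ∈ p ⊔ q := by rw [hpq.sup_eq_top]; trivial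
        obtain ⟨u, hu, v, hv, huv⟩ := Submodule.mem_sup.1 this
        rw [map_smul, ← huv, smul_add, kill_of_simple p ha hu, zero_add]
        exact q.smul_mem _ hv
      obtain ⟨z, hz, hzx⟩ := hle hx
      have : z = x := Subtype.ext hzx
      subst this
      exact hy0 (Submodule.disjoint_def.1 hpq.disjoint _ hy hz)
    · intro a ha
      have := kill_of_simple p ha hy
      rw [← map_smul, Submodule.mkQ_apply, Submodule.Quotient.mk_eq_zero] at this
      exact this
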